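/- Let M be a real symmetric 2×2 matrix, let Ω be a 2×2 complex symmetric matrix with Im Ω = M, let c ∈ ℝ² with cᵀMc < 0, and let v ∈ ℂ². Set Λ := Ω - (i/Q_M(c))·(Mc)(Mc)ᵀ. Assume Im(Q_Ω(v)) > 0 and Re(-2i·Q_Λ(v)) > 0. Then -∫₀^∞ E(cᵀMv·√t / √(-½cᵀMc))·exp(2πi·Q_Ω(v)·t) dt = cᵀMv / (4πi·√(-Q_M(c))·Q_Ω(v)·(-2i·Q_Λ(v))^{1/2}), where √(-½cᵀMc) = √(-Q_M(c)) is the positive real square root and (-2i·Q_Λ(v))^{1/2} denotes the principal branch of the complex square root. -/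

import Mathlib

open Matrix

/-- `E(z) := ∫₀^z e^{-πu²} du`, realised as `∫₀¹ z·exp(-π t² z²) dt`. -/
noncomputable def E (z : ℂ) : ℂ :=
  ∫ t in (0 : ℝ)..1, z * Complex.exp (-(Real.pi : ℂ) * (t : ℂ) ^ 2 * z ^ 2)

/-- `Q_A(v) := ½ vᵀAv` for a 2×2 complex matrix `A` and `v ∈ ℂ²`. -/
noncomputable def Qc (A : Matrix (Fin 2) (Fin 2) ℂ) (v : Fin 2 → ℂ) : ℂ :=
  (1 / 2) * (v ⬝ᵥ A.mulVec v)

open MeasureTheory Set Filter Topology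

lemma E_real_mul (a : ℂ) (x : ℝ) :
    E (a * (x : ℂ)) = ∫ y in (0 : ℝ)..x, a * Complex.exp (-(Real.pi : ℂ) * a ^ 2 * (y : ℂ) ^ 2) := by
  have h := intervalIntegral.smul_integral_comp_mul_left (a := 0) (b := 1)
    (fun y : ℝ => a * Complex.exp (-(Real.pi : ℂ) * a ^ 2 * (y : ℂ) ^ 2)) x
  simp only [mul_zero, mul_one] at h
  rw [← h, E, ← intervalIntegral.integral_smul]
  congr 1
  ext t
  rw [Complex.real_smul]
  push_cast
  have : -(Real.pi : ℂ) * (t : ℂ) ^ 2 * (a * (x : ℂ)) ^ 2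
    = -(Real.pi : ℂ) * a ^ 2 * ((x : ℂ) * t) ^ 2 := by ring
  rw [this]; ring

lemma E_hasDeriv (a : ℂ) (x : ℝ) :
    HasDerivAt (fun x : ℝ => E (a * (x : ℂ)))
      (a * Complex.exp (-(Real.pi : ℂ) * a ^ 2 * (x : ℂ) ^ 2)) x := by
  have h0 : (fun x : ℝ => E (a * (x : ℂ))) = fun x : ℝ =>
      ∫ y in (0 : ℝ)..x, a * Complex.exp (-(Real.pi : ℂ) * a ^ 2 * (y : ℂ) ^ 2) := by
    ext x; exact E_real_mul a x
  rw [h0]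
  have hc : Continuous (fun y : ℝ => a * Complex.exp (-(Real.pi : ℂ) * a ^ 2 * (y : ℂ) ^ 2)) := by
    fun_prop
  exact intervalIntegral.integral_hasDerivAt_right (hc.intervalIntegrable _ _)
    (hc.stronglyMeasurableAtFilter _ _) hc.continuousAt

lemma E_bound (a s : ℂ) (m : ℝ) (h1 : m ≤ s.re) (h2 : m ≤ (s + a ^ 2).re) (x : ℝ) (hx : 0 ≤ x) :
    ‖E (a * (x : ℂ)) * Complex.exp (-(Real.pi : ℂ) * s * (x : ℂ) ^ 2)‖
      ≤ ‖a‖ * x * Real.exp (-(Real.pi * m) * x ^ 2) := by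
  rw [E, ← intervalIntegral.integral_mul_const]
  have := intervalIntegral.norm_integral_le_of_norm_le_const (a := (0 : ℝ)) (b := 1)
    (C := ‖a‖ * x * Real.exp (-(Real.pi * m) * x ^ 2))
    (f := fun t : ℝ => a * (x : ℂ) * Complex.exp (-(Real.pi : ℂ) * (t : ℂ) ^ 2 * (a * (x : ℂ)) ^ 2) *
      Complex.exp (-(Real.pi : ℂ) * s * (x : ℂ) ^ 2)) ?_
  · simpa using this
  intro t ht
  rw [uIoc_of_le zero_le_one] at ht
  rw [mul_assoc, ← Complex.exp_add, norm_mul, norm_mul, Complex.norm_exp, Complex.norm_real,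
    Real.norm_of_nonneg hx]
  gcongr
  have e : (-(Real.pi : ℂ) * (t : ℂ) ^ 2 * (a * (x : ℂ)) ^ 2 + -(Real.pi : ℂ) * s * (x : ℂ) ^ 2)
     = ((-(Real.pi * x ^ 2) : ℝ) : ℂ) * (s + ((t ^ 2 : ℝ) : ℂ) * a ^ 2) := by
    push_cast; ring
  rw [e, Complex.re_ofReal_mul, Complex.add_re, Complex.re_ofReal_mul]
  rw [Complex.add_re] at h2
  have ht2 : t ^ 2 ≤ 1 := by nlinarith [ht.1, ht.2]
  have key : m ≤ s.re + t ^ 2 * (a ^ 2).re := by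
    nlinarith [mul_nonneg (sub_nonneg.2 ht2) (sub_nonneg.2 h1),
      mul_nonneg (sq_nonneg t) (sub_nonneg.2 h2)]
  have := mul_le_mul_of_nonneg_left key (by positivity : 0 ≤ Real.pi * x ^ 2)
  linarith

lemma main_x (a s : ℂ) (h1 : 0 < s.re) (h2 : 0 < (s + a ^ 2).re) :
    ∫ x in Ioi (0 : ℝ), (2 * (x : ℂ)) *
      (E (a * (x : ℂ)) * Complex.exp (-(Real.pi : ℂ) * s * (x : ℂ) ^ 2))
    = a / (2 * Real.pi * s * (s + a ^ 2) ^ ((1 : ℂ) / 2)) := by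
  obtain ⟨m, hm0, hm1, hm2⟩ : ∃ m : ℝ, 0 < m ∧ m ≤ s.re ∧ m ≤ (s + a ^ 2).re :=
    ⟨min s.re (s + a ^ 2).re, lt_min h1 h2, min_le_left _ _, min_le_right _ _⟩
  have hpi := Real.pi_pos
  have hpic : (Real.pi : ℂ) ≠ 0 := by exact_mod_cast hpi.ne'
  have hs : s ≠ 0 := by rintro rfl; simp at h1
  have hw : s + a ^ 2 ≠ 0 := by intro h; rw [h] at h2; simp at h2
  have hpm : 0 < Real.pi * m := by positivity
  have hwre : 0 < ((Real.pi : ℂ) * (s + a ^ 2)).re := by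
    rw [Complex.re_ofReal_mul]; positivity
  set g : ℝ → ℂ := fun x => Complex.exp (-(Real.pi : ℂ) * s * (x : ℂ) ^ 2) with hg
  have hgd : ∀ x : ℝ, HasDerivAt g (-(2 * Real.pi * s * x) * g x) x := by
    intro x
    have hx : HasDerivAt (fun x : ℝ => (x : ℂ)) 1 x := Complex.ofRealCLM.hasDerivAt
    have := ((hx.pow 2).const_mul (-(Real.pi : ℂ) * s)).cexp
    refine HasDerivAt.congr_deriv this ?_
    simp only [hg, Pi.pow_apply]; push_cast; ring
  have hEc : Continuous (fun x : ℝ => E (a * (x : ℂ))) :=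
    continuous_iff_continuousAt.2 fun x => (E_hasDeriv a x).continuousAt
  -- integrability
  have hI1 : IntegrableOn (fun x : ℝ => (2 * (x : ℂ)) * (E (a * (x : ℂ)) * g x)) (Ioi 0) := by
    have hb : Integrable (fun x : ℝ => (2 * ‖a‖) * (x ^ (2 : ℝ) * Real.exp (-(Real.pi * m) * x ^ 2))) :=
      (integrable_rpow_mul_exp_neg_mul_sq hpm (by norm_num)).const_mul _
    refine Integrable.mono' hb.integrableOn ?_ ?_
    · apply Continuous.aestronglyMeasurable
      simp only [hg]; fun_prop
    · refine (ae_restrict_iff' measurableSet_Ioi).2 (Eventually.of_forall fun x hx => ?_)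
      have hx : 0 < x := hx
      have := E_bound a s m hm1 hm2 x hx.le
      rw [norm_mul, norm_mul, Complex.norm_real, Real.norm_of_nonneg hx.le, Real.rpow_two]
      have := mul_le_mul_of_nonneg_left this (by positivity : 0 ≤ 2 * x)
      simp only [Complex.norm_ofNat]
      calc _ ≤ _ := this
        _ = _ := by ring
  have hI2 : IntegrableOn (fun x : ℝ => Complex.exp (-((Real.pi : ℂ) * (s + a ^ 2)) * (x : ℂ) ^ 2)) (Ioi 0) :=
    (integrable_cexp_neg_mul_sq hwre).integrableOn
  have hd : ∀ x ∈ Ici (0 : ℝ), HasDerivAt (fun x : ℝ => -(E (a * (x : ℂ)) * g x) / (Real.pi * s))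
      ((2 * (x : ℂ)) * (E (a * (x : ℂ)) * g x) -
        (a / (Real.pi * s)) * Complex.exp (-((Real.pi : ℂ) * (s + a ^ 2)) * (x : ℂ) ^ 2)) x := by
    intro x _
    have := (((E_hasDeriv a x).mul (hgd x)).neg).div_const ((Real.pi : ℂ) * s)
    refine HasDerivAt.congr_deriv this ?_
    have e : Complex.exp (-((Real.pi : ℂ) * (s + a ^ 2)) * (x : ℂ) ^ 2)
        = Complex.exp (-(Real.pi : ℂ) * a ^ 2 * (x : ℂ) ^ 2) * g x := by
      simp only [hg]; rw [← Complex.exp_add]; congr 1; ring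
    rw [e]
    field_simp
    ring
  have htend : Tendsto (fun x : ℝ => -(E (a * (x : ℂ)) * g x) / (Real.pi * s)) atTop (𝓝 0) := by
    have h0 : Tendsto (fun x : ℝ => ‖a‖ * x * Real.exp (-(Real.pi * m) * x ^ 2)) atTop (𝓝 0) := by
      have := (rpow_mul_exp_neg_mul_sq_isLittleO_exp_neg hpm 1).trans_tendsto
        (Real.tendsto_exp_neg_atTop_nhds_zero.comp (tendsto_id.const_mul_atTop (by norm_num : (0:ℝ) < 1/2)) |>.congr fun x => by simp)
      have := this.const_mul ‖a‖
      simpa [mul_assoc] using this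
    have h3 : Tendsto (fun x : ℝ => E (a * (x : ℂ)) * g x) atTop (𝓝 0) := by
      refine squeeze_zero_norm' ?_ h0
      filter_upwards [eventually_ge_atTop 0] with x hx
      exact E_bound a s m hm1 hm2 x hx
    simpa using h3.neg.div_const ((Real.pi : ℂ) * s)
  have hfin := integral_Ioi_of_hasDerivAt_of_tendsto' hd (hI1.sub (hI2.const_mul _)) htend
  rw [integral_sub hI1 (hI2.const_mul _), integral_const_mul, integral_gaussian_complex_Ioi hwre] at hfin
  have hE0 : E 0 = 0 := by simp [E]
  simp only [Complex.ofReal_zero, mul_zero, hE0, zero_mul, neg_zero, zero_div, sub_zero] at hfin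
  rw [sub_eq_zero.1 hfin]
  have e1 : (Real.pi : ℂ) / (Real.pi * (s + a ^ 2)) = (s + a ^ 2)⁻¹ := by
    field_simp
  have harg : (s + a ^ 2).arg ≠ Real.pi := by
    intro h
    rw [Complex.arg_eq_pi_iff] at h
    linarith [h.1]
  rw [e1, Complex.inv_cpow _ _ harg]
  have hwp : (s + a ^ 2) ^ ((1 : ℂ) / 2) ≠ 0 := by
    rw [Complex.cpow_ne_zero_iff]; exact Or.inl hw
  field_simp

lemma main_t (a s : ℂ) (h1 : 0 < s.re) (h2 : 0 < (s + a ^ 2).re) :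
    ∫ t in Ioi (0 : ℝ),
      E (a * (Real.sqrt t : ℂ)) * Complex.exp (-(Real.pi : ℂ) * s * (t : ℂ))
    = a / (2 * Real.pi * s * (s + a ^ 2) ^ ((1 : ℂ) / 2)) := by
  rw [← main_x a s h1 h2, ← integral_comp_rpow_Ioi_of_pos (p := 2) (by norm_num)]
  refine setIntegral_congr_fun measurableSet_Ioi fun x hx => ?_
  have hx : 0 < x := hx
  have e : (2 : ℝ) - 1 = 1 := by norm_num
  simp only [e, Real.rpow_one, Real.rpow_two, Real.sqrt_sq hx.le, Complex.real_smul]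
  push_cast
  ring

/-- **Corollary (formula for `κ_Ω^c(v)`).**
With `M` real symmetric, `Im Ω = M`, `cᵀMc < 0`, `Λ = Ω - (i/Q_M(c))·(Mc)(Mc)ᵀ`,
`Im(Q_Ω(v)) > 0` and `Re(-2i·Q_Λ(v)) > 0`, we have
`-∫₀^∞ E(cᵀMv·√t / √(-½cᵀMc))·e(Q_Ω(v)t) dt
  = cᵀMv / (4πi·√(-Q_M(c))·Q_Ω(v)·(-2i·Q_Λ(v))^{1/2})`. -/
theorem stmt_6 (M : Matrix (Fin 2) (Fin 2) ℝ) (hM : M.IsSymm)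
    (Ω : Matrix (Fin 2) (Fin 2) ℂ) (hΩ : Ω.IsSymm)
    (hIm : ∀ i j, (Ω i j).im = M i j)
    (c : Fin 2 → ℝ) (hc : c ⬝ᵥ M.mulVec c < 0)
    (v : Fin 2 → ℂ)
    (Λ : Matrix (Fin 2) (Fin 2) ℂ)
    (hΛ : Λ = Ω - (Complex.I / Qc (M.map Complex.ofReal) (fun i => (c i : ℂ))) •
      Matrix.vecMulVec ((M.map Complex.ofReal).mulVec fun i => (c i : ℂ))
        ((M.map Complex.ofReal).mulVec fun i => (c i : ℂ)))
    (h1 : 0 < (Qc Ω v).im)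
    (h2 : 0 < (-2 * Complex.I * Qc Λ v).re) :
    -∫ t in Set.Ioi (0 : ℝ),
        E (((fun i => (c i : ℂ)) ⬝ᵥ (M.map Complex.ofReal).mulVec v) * (Real.sqrt t : ℂ) /
            (Real.sqrt (-(1 / 2) * (c ⬝ᵥ M.mulVec c)) : ℂ)) *
          Complex.exp (2 * (Real.pi : ℂ) * Complex.I * Qc Ω v * (t : ℂ))
      = ((fun i => (c i : ℂ)) ⬝ᵥ (M.map Complex.ofReal).mulVec v) /
          (4 * (Real.pi : ℂ) * Complex.I * (Real.sqrt (-((1 / 2) * (c ⬝ᵥ M.mulVec c))) : ℂ) *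
            Qc Ω v * (-2 * Complex.I * Qc Λ v) ^ ((1 : ℂ) / 2)) := by
  have hq : 0 < -(1 / 2) * (c ⬝ᵥ M.mulVec c) := by linarith
  have hr : -((1 / 2) * (c ⬝ᵥ M.mulVec c)) = -(1 / 2) * (c ⬝ᵥ M.mulVec c) := by ring
  rw [hr]
  set b : ℂ := (fun i => (c i : ℂ)) ⬝ᵥ (M.map Complex.ofReal).mulVec v with hb
  set r : ℝ := Real.sqrt (-(1 / 2) * (c ⬝ᵥ M.mulVec c)) with hrdef
  have hr0 : 0 < r := Real.sqrt_pos.2 hq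
  have hrc : (r : ℂ) ≠ 0 := by exact_mod_cast hr0.ne'
  have hr2 : r ^ 2 = -(1 / 2) * (c ⬝ᵥ M.mulVec c) := Real.sq_sqrt hq.le
  have hQ : Qc (M.map Complex.ofReal) (fun i => (c i : ℂ)) = -(r : ℂ) ^ 2 := by
    rw [← Complex.ofReal_pow, hr2]
    simp [Qc, dotProduct, mulVec, Fin.sum_univ_two]
  have hM01 : M 1 0 = M 0 1 := hM.apply 0 1
  have hL : -2 * Complex.I * Qc Λ v = -2 * Complex.I * Qc Ω v + (b / r) ^ 2 := by
    have hv : Qc Λ v = Qc Ω v + (Complex.I / (r : ℂ) ^ 2) * (1 / 2) * b ^ 2 := by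
      rw [hΛ, hQ, hb]
      simp [Qc, dotProduct, mulVec, Fin.sum_univ_two, vecMulVec_apply, hM01]
      field_simp
      ring
    rw [hv]
    field_simp
    ring_nf
    simp
  have hs1 : 0 < (-2 * Complex.I * Qc Ω v).re := by
    simp; exact h1
  rw [hL] at h2 ⊢
  have key := main_t (b / r) (-2 * Complex.I * Qc Ω v) hs1 h2
  have hint : (∫ t in Set.Ioi (0 : ℝ), E (b * (Real.sqrt t : ℂ) / (r : ℂ)) *
          Complex.exp (2 * (Real.pi : ℂ) * Complex.I * Qc Ω v * (t : ℂ)))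
      = ∫ t in Set.Ioi (0 : ℝ), E (b / r * (Real.sqrt t : ℂ)) *
          Complex.exp (-(Real.pi : ℂ) * (-2 * Complex.I * Qc Ω v) * (t : ℂ)) := by
    congr 1
    ext t
    congr 2 <;> ring
  rw [hint, key]
  generalize (-2 * Complex.I * Qc Ω v + (b / r) ^ 2) ^ ((1 : ℂ) / 2) = W
  simp only [div_eq_mul_inv, mul_inv]
  ring_nf
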